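/- Define Si(t) = ∫₀ᵗ (sin x)/x dx. Then for every t ∈ (0, π/2), t − t³/18 + ((2π³ − 48π + 96)/(15π⁵))·t⁵ < Si(t) < t − t³/18 + t⁵/600, and also (9/8)·sin(2t/3) + t/4 + (2(16 − 5π)/(5π⁵))·t⁵ < Si(t) < (9/8)·sin(2t/3) + t/4 + (7/16200)·t⁵. -/

import Mathlib

open Real

lemma aux_mono (f f' : ℝ → ℝ) (h : ∀ x, HasDerivAt f (f' x) x) (h0 : f 0 = 0)
    (hp : ∀ x, 0 ≤ x → 0 ≤ f' x) (x : ℝ) (hx : 0 ≤ x) : 0 ≤ f x := by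
  have hm : MonotoneOn f (Set.Ici 0) := by
    apply monotoneOn_of_deriv_nonneg (convex_Ici 0)
    · exact fun y _ => (h y).continuousAt.continuousWithinAt
    · exact fun y _ => (h y).differentiableAt.differentiableWithinAt
    · intro y hy
      rw [interior_Ici] at hy
      rw [(h y).deriv]
      exact hp y (le_of_lt hy)
  have := hm (Set.mem_Ici.2 le_rfl) (Set.mem_Ici.2 hx) hx
  linarith

lemma c2 (x : ℝ) (hx : 0 ≤ x) : 0 ≤ cos x - (1 - x^2/2) := by
  refine aux_mono (fun x => cos x - (1 - x^2/2)) (fun x => x - sin x) ?_ (by simp) ?_ x hx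
  · intro x
    have := (hasDerivAt_cos x).sub (((hasDerivAt_id x).pow 2).div_const 2 |>.const_sub 1)
    refine HasDerivAt.congr_deriv this ?_
    simp; ring
  · intro x hx
    linarith [sin_le hx]

lemma s3 (x : ℝ) (hx : 0 ≤ x) : 0 ≤ sin x - (x - x^3/6) := by
  refine aux_mono (fun x => sin x - (x - x^3/6)) (fun x => cos x - (1 - x^2/2)) ?_ (by simp) c2 x hx
  intro x
  have := (hasDerivAt_sin x).sub ((hasDerivAt_id x).sub (((hasDerivAt_id x).pow 3).div_const 6))
  refine HasDerivAt.congr_deriv this ?_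
  simp; ring

lemma c4 (x : ℝ) (hx : 0 ≤ x) : 0 ≤ (1 - x^2/2 + x^4/24) - cos x := by
  refine aux_mono (fun x => (1 - x^2/2 + x^4/24) - cos x) (fun x => sin x - (x - x^3/6)) ?_
    (by simp) s3 x hx
  intro x
  have := (((((hasDerivAt_id x).pow 2).div_const 2 |>.const_sub 1).add
    (((hasDerivAt_id x).pow 4).div_const 24))).sub (hasDerivAt_cos x)
  refine HasDerivAt.congr_deriv this ?_
  simp; ring

lemma s5 (x : ℝ) (hx : 0 ≤ x) : 0 ≤ (x - x^3/6 + x^5/120) - sin x := by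
  refine aux_mono (fun x => (x - x^3/6 + x^5/120) - sin x)
    (fun x => (1 - x^2/2 + x^4/24) - cos x) ?_ (by simp) c4 x hx
  intro x
  have := (((hasDerivAt_id x).sub (((hasDerivAt_id x).pow 3).div_const 6)).add
    (((hasDerivAt_id x).pow 5).div_const 120)).sub (hasDerivAt_sin x)
  refine HasDerivAt.congr_deriv this ?_
  simp; ring

lemma c6 (x : ℝ) (hx : 0 ≤ x) : 0 ≤ cos x - (1 - x^2/2 + x^4/24 - x^6/720) := by
  refine aux_mono (fun x => cos x - (1 - x^2/2 + x^4/24 - x^6/720))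
    (fun x => (x - x^3/6 + x^5/120) - sin x) ?_ (by simp) s5 x hx
  intro x
  have := (hasDerivAt_cos x).sub (((((hasDerivAt_id x).pow 2).div_const 2 |>.const_sub 1).add
    (((hasDerivAt_id x).pow 4).div_const 24)).sub (((hasDerivAt_id x).pow 6).div_const 720))
  refine HasDerivAt.congr_deriv this ?_
  simp; ring

lemma s7 (x : ℝ) (hx : 0 ≤ x) : 0 ≤ sin x - (x - x^3/6 + x^5/120 - x^7/5040) := by
  refine aux_mono (fun x => sin x - (x - x^3/6 + x^5/120 - x^7/5040))
    (fun x => cos x - (1 - x^2/2 + x^4/24 - x^6/720)) ?_ (by simp) c6 x hx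
  intro x
  have := (hasDerivAt_sin x).sub ((((hasDerivAt_id x).sub (((hasDerivAt_id x).pow 3).div_const 6)).add
    (((hasDerivAt_id x).pow 5).div_const 120)).sub (((hasDerivAt_id x).pow 7).div_const 5040))
  refine HasDerivAt.congr_deriv this ?_
  simp; ring

lemma c8 (x : ℝ) (hx : 0 ≤ x) : 0 ≤ (1 - x^2/2 + x^4/24 - x^6/720 + x^8/40320) - cos x := by
  refine aux_mono (fun x => (1 - x^2/2 + x^4/24 - x^6/720 + x^8/40320) - cos x)
    (fun x => sin x - (x - x^3/6 + x^5/120 - x^7/5040)) ?_ (by simp) s7 x hx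
  intro x
  have := ((((((hasDerivAt_id x).pow 2).div_const 2 |>.const_sub 1).add
    (((hasDerivAt_id x).pow 4).div_const 24)).sub (((hasDerivAt_id x).pow 6).div_const 720)).add
    (((hasDerivAt_id x).pow 8).div_const 40320)).sub (hasDerivAt_cos x)
  refine HasDerivAt.congr_deriv this ?_
  simp; ring

lemma s9 (x : ℝ) (hx : 0 ≤ x) :
    0 ≤ (x - x^3/6 + x^5/120 - x^7/5040 + x^9/362880) - sin x := by
  refine aux_mono (fun x => (x - x^3/6 + x^5/120 - x^7/5040 + x^9/362880) - sin x)
    (fun x => (1 - x^2/2 + x^4/24 - x^6/720 + x^8/40320) - cos x) ?_ (by simp) c8 x hx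
  intro x
  have := ((((hasDerivAt_id x).sub (((hasDerivAt_id x).pow 3).div_const 6)).add
    (((hasDerivAt_id x).pow 5).div_const 120)).sub (((hasDerivAt_id x).pow 7).div_const 5040)).add
    (((hasDerivAt_id x).pow 9).div_const 362880) |>.sub (hasDerivAt_sin x)
  refine HasDerivAt.congr_deriv this ?_
  simp; ring

lemma Si_int (t : ℝ) (ht : 0 ≤ t) :
    IntervalIntegrable (fun x => sin x / x) MeasureTheory.volume 0 t := by
  have h : IntervalIntegrable sinc MeasureTheory.volume 0 t := continuous_sinc.intervalIntegrable _ _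
  refine h.congr ?_
  intro x hx
  rw [Set.uIoc_of_le ht] at hx
  exact sinc_of_ne_zero hx.1.ne'

lemma Si_lower (t : ℝ) (ht : 0 ≤ t) :
    t - t^3/18 + t^5/600 - t^7/35280 ≤ ∫ x in (0 : ℝ)..t, sin x / x := by
  have : ∫ x in (0:ℝ)..t, (1 - x^2/6 + x^4/120 - x^6/5040)
      = t - t^3/18 + t^5/600 - t^7/35280 := by
    rw [intervalIntegral.integral_sub, intervalIntegral.integral_add, intervalIntegral.integral_sub]
    · simp only [intervalIntegral.integral_div, integral_pow, intervalIntegral.integral_const]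
      simp; ring
    all_goals exact Continuous.intervalIntegrable (by fun_prop) _ _
  rw [← this]
  apply intervalIntegral.integral_mono_on_of_le_Ioo ht _ (Si_int t ht)
  · intro x hx
    rw [le_div_iff₀ hx.1]
    linarith [s7 x hx.1.le]
  · exact Continuous.intervalIntegrable (by fun_prop) _ _

lemma Si_upper (t : ℝ) (ht : 0 ≤ t) :
    ∫ x in (0 : ℝ)..t, sin x / x ≤ t - t^3/18 + t^5/600 - t^7/35280 + t^9/3265920 := by
  have : ∫ x in (0:ℝ)..t, (1 - x^2/6 + x^4/120 - x^6/5040 + x^8/362880)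
      = t - t^3/18 + t^5/600 - t^7/35280 + t^9/3265920 := by
    rw [intervalIntegral.integral_add, intervalIntegral.integral_sub, intervalIntegral.integral_add,
      intervalIntegral.integral_sub]
    · simp only [intervalIntegral.integral_div, integral_pow, intervalIntegral.integral_const]
      simp; ring
    all_goals exact Continuous.intervalIntegrable (by fun_prop) _ _
  rw [← this]
  apply intervalIntegral.integral_mono_on_of_le_Ioo ht (Si_int t ht)
  · exact Continuous.intervalIntegrable (by fun_prop) _ _
  · intro x hx
    rw [div_le_iff₀ hx.1]
    linarith [s9 x hx.1.le]

lemma coef1 : (2 * π ^ 3 - 48 * π + 96) / (15 * π ^ 5) ≤ 0.00159 := by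
  rw [div_le_iff₀ (by positivity)]
  have h3 : π^3 ≤ (3.1416:ℝ)^3 := by gcongr; exact pi_lt_d4.le
  have h5 : (3.1415:ℝ)^5 ≤ π^5 := by gcongr; exact pi_gt_d4.le
  have := pi_gt_d4
  norm_num at *
  linarith

lemma coef2 : 2 * (16 - 5 * π) / (5 * π ^ 5) ≤ 0.00039 := by
  rw [div_le_iff₀ (by positivity)]
  have h5 : (3.1415:ℝ)^5 ≤ π^5 := by gcongr; exact pi_gt_d4.le
  have := pi_gt_d4
  norm_num at *
  linarith

theorem stmt_15 (t : ℝ) (ht : t ∈ Set.Ioo (0 : ℝ) (π / 2)) :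
    (t - t ^ 3 / 18 + (2 * π ^ 3 - 48 * π + 96) / (15 * π ^ 5) * t ^ 5 <
        ∫ x in (0 : ℝ)..t, Real.sin x / x) ∧
    ((∫ x in (0 : ℝ)..t, Real.sin x / x) < t - t ^ 3 / 18 + t ^ 5 / 600) ∧
    (9 / 8 * Real.sin (2 * t / 3) + t / 4 + 2 * (16 - 5 * π) / (5 * π ^ 5) * t ^ 5 <
        ∫ x in (0 : ℝ)..t, Real.sin x / x) ∧
    ((∫ x in (0 : ℝ)..t, Real.sin x / x) <
        9 / 8 * Real.sin (2 * t / 3) + t / 4 + 7 / 16200 * t ^ 5) := by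
  obtain ⟨h0, h1⟩ := ht
  have hp := pi_lt_d4
  have h2 : t < 1.5708 := by norm_num at *; linarith
  have hl := Si_lower t h0.le
  have hu := Si_upper t h0.le
  have h5 : 0 < t^5 := by positivity
  have hsq : t^2 < 2.4675 := by
    norm_num at *; nlinarith
  have h7 : t^7 < 2.4675 * t^5 := by
    have := mul_lt_mul_of_pos_right hsq h5
    calc t^7 = t^2 * t^5 := by ring
      _ < _ := this
  have h7p : 0 < t^7 := by positivity
  have h9 : t^9 < 2.4675 * t^7 := by
    have := mul_lt_mul_of_pos_right hsq h7p
    calc t^9 = t^2 * t^7 := by ring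
      _ < _ := this
  have k1 := mul_le_mul_of_nonneg_right coef1 h5.le
  have k2 := mul_le_mul_of_nonneg_right coef2 h5.le
  have hs9 := s9 (2*t/3) (by positivity)
  have hs7 := s7 (2*t/3) (by positivity)
  ring_nf at hs9 hs7
  have e : t * (2/3) = 2*t/3 := by ring
  rw [e] at hs9 hs7
  norm_num at h7 h9 k1 k2
  refine ⟨?_, ?_, ?_, ?_⟩ <;> linarith
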